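/- Let ν ≥ 0. Let u : ℝ × ℝ³ → ℝ³ be C¹, p̂ : ℝ × ℝ³ → ℝ continuous, and φ : ℝ × ℝ³ → ℝ be C¹ with supp φ(t,·) contained in a fixed compact set K for all t. Assume that at every time t and for every constant vector c ∈ ℝ³ the EMAC variational identity ∫_{ℝ³} [ ∂ₜu·v + 2(D(u)u)·v + (div u)(u·v) + 2ν ⟨D(u), D(v)⟩_F − p̂ (div v) ] dx = 0 holds with the test field v(x) = φ(t,x) (x × c). Then, setting p = p̂ + ½‖u‖², for every t the map t ↦ ∫_{ℝ³} φ (u × x) dx is differentiable with derivative ∫_{ℝ³} [ −2ν (D(u)∇φ) × x + p (∇φ × x) ] dx + R(t), where the residual is R(t) = ∫_{ℝ³} (∂ₜφ + u·∇φ)(u × x) dx and x denotes the position vector. -/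

import Mathlib

/-!
Write `A = ∂ₜ(φ (u × x))`, and let `B` and `R` be the integrands of the stress term and of the
transport residual. Differentiating under the integral sign (the integrand is `C¹` and supported in
the fixed compact set `K`) gives `d/dt ∫ φ (u × x) = ∫ A`, so the claim is `∫ (A - B - R) = 0`.

With `v = φ (x × c)`, the EMAC integrand equals `c · (A - B - R) + div ((u · v) u + ½‖u‖² v)`
pointwise (`pointwise_identity`). It uses `2D(u)u + (div u)u = div (u ⊗ u) + ½∇‖u‖²`
(`sum_fderiv_flux`), and the skew-symmetry of the gradient of the rotation field `x × c`, so that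
only `∇φ` survives in the contractions with `∇v`. The divergence of the compactly supported `C¹`
flux integrates to zero (`integral_fderiv_zero`), so the EMAC identity says that
`c · ∫ (A - B - R) = 0` for every `c`.
-/

open MeasureTheory Real Set Filter Matrix

noncomputable section

/-- The Jacobian matrix of a vector field on Euclidean space. -/
def jac {d : ℕ} (u : EuclideanSpace ℝ (Fin d) → EuclideanSpace ℝ (Fin d))
    (x : EuclideanSpace ℝ (Fin d)) : Matrix (Fin d) (Fin d) ℝ :=
  fun i j => fderiv ℝ u x (EuclideanSpace.single j 1) i

/-- The rate-of-deformation (symmetric gradient) tensor. -/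
def defT {d : ℕ} (u : EuclideanSpace ℝ (Fin d) → EuclideanSpace ℝ (Fin d))
    (x : EuclideanSpace ℝ (Fin d)) : Matrix (Fin d) (Fin d) ℝ :=
  (1/2 : ℝ) • (jac u x + (jac u x)ᵀ)

/-- The divergence of a vector field. -/
def dvg {d : ℕ} (u : EuclideanSpace ℝ (Fin d) → EuclideanSpace ℝ (Fin d))
    (x : EuclideanSpace ℝ (Fin d)) : ℝ :=
  Matrix.trace (jac u x)

/-- The gradient of a scalar field, as a Euclidean vector. -/
def grd {d : ℕ} (φ : EuclideanSpace ℝ (Fin d) → ℝ)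
    (x : EuclideanSpace ℝ (Fin d)) : EuclideanSpace ℝ (Fin d) :=
  (EuclideanSpace.equiv (Fin d) ℝ).symm (fun i => fderiv ℝ φ x (EuclideanSpace.single i 1))

/-- Matrix acting on a Euclidean vector. -/
def matVec {d : ℕ} (A : Matrix (Fin d) (Fin d) ℝ) (v : EuclideanSpace ℝ (Fin d)) :
    EuclideanSpace ℝ (Fin d) :=
  (EuclideanSpace.equiv (Fin d) ℝ).symm (A.mulVec (EuclideanSpace.equiv (Fin d) ℝ v))

/-- Euclidean dot product. -/
def dotp {d : ℕ} (a b : EuclideanSpace ℝ (Fin d)) : ℝ := ∑ i, a i * b i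

/-- Frobenius inner product of matrices. -/
def frob {d : ℕ} (A B : Matrix (Fin d) (Fin d) ℝ) : ℝ := ∑ i, ∑ j, A i j * B i j

/-- Cross product on Euclidean 3-space. -/
def cross (a b : EuclideanSpace ℝ (Fin 3)) : EuclideanSpace ℝ (Fin 3) :=
  (EuclideanSpace.equiv (Fin 3) ℝ).symm
    (crossProduct ((EuclideanSpace.equiv (Fin 3) ℝ) a) ((EuclideanSpace.equiv (Fin 3) ℝ) b))

/-- divergence of the rate-of-deformation tensor: i-th component is ∑ⱼ ∂ⱼ D(u)ᵢⱼ. -/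
def divD {d : ℕ} (u : EuclideanSpace ℝ (Fin d) → EuclideanSpace ℝ (Fin d))
    (x : EuclideanSpace ℝ (Fin d)) : EuclideanSpace ℝ (Fin d) :=
  (EuclideanSpace.equiv (Fin d) ℝ).symm
    (fun i => ∑ j, fderiv ℝ (fun y => defT u y i j) x (EuclideanSpace.single j 1))

theorem matVec_apply {d : ℕ} (A : Matrix (Fin d) (Fin d) ℝ) (v : EuclideanSpace ℝ (Fin d))
    (i : Fin d) : matVec A v i = ∑ j, A i j * v j := rfl

theorem cross_apply_vec (a b : EuclideanSpace ℝ (Fin 3)) (i : Fin 3) : cross a b i =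
    ![a 1 * b 2 - a 2 * b 1, a 2 * b 0 - a 0 * b 2, a 0 * b 1 - a 1 * b 0] i := by
  simp [cross, crossProduct]

theorem continuous_of_coord {X : Type*} [TopologicalSpace X] {f : X → EuclideanSpace ℝ (Fin 3)}
    (h : ∀ i, Continuous fun x => f x i) : Continuous f :=
  (PiLp.continuous_toLp 2 _).comp (continuous_pi h)

theorem continuous_cross : Continuous fun p :
    EuclideanSpace ℝ (Fin 3) × EuclideanSpace ℝ (Fin 3) => cross p.1 p.2 := by
  refine continuous_of_coord fun i => ?_
  simp only [cross_apply_vec]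
  fin_cases i <;> simp <;> fun_prop

/-- The map `y ↦ y × c` as a continuous linear map. -/
def crossRightL (c : EuclideanSpace ℝ (Fin 3)) :
    EuclideanSpace ℝ (Fin 3) →L[ℝ] EuclideanSpace ℝ (Fin 3) :=
  LinearMap.toContinuousLinearMap
   { toFun := fun y => cross y c
     map_add' := by
        intro a b; ext i; fin_cases i <;> simp [cross_apply_vec] <;> ring
     map_smul' := by
        intro a b; ext i; fin_cases i <;> simp [cross_apply_vec] <;> ring }

theorem crossRightL_apply (c y : EuclideanSpace ℝ (Fin 3)) : crossRightL c y = cross y c := rfl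

/-- Integration by parts against the constant function `1`: there is no boundary term. -/
theorem integral_fderiv_zero {g : EuclideanSpace ℝ (Fin 3) → ℝ} (hg : ContDiff ℝ 1 g)
    (hs : HasCompactSupport g) (e : EuclideanSpace ℝ (Fin 3)) :
    Integrable (fun x => fderiv ℝ g x e) ∧ ∫ x, fderiv ℝ g x e = 0 := by
  have hi : Integrable (fun x => fderiv ℝ g x e) :=
    ((hg.continuous_fderiv one_ne_zero).clm_apply continuous_const).integrable_of_hasCompactSupport
      (hs.fderiv_apply ℝ e)
  refine ⟨hi, ?_⟩
  have := integral_mul_fderiv_eq_neg_fderiv_mul_of_integrable (μ := volume)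
    (f := fun _ : EuclideanSpace ℝ (Fin 3) => (1:ℝ)) (g := g) (v := e)
    (by simp) (by simpa using hi)
    (by simpa using hg.continuous.integrable_of_hasCompactSupport hs) (by simp)
    (fun x _ => (hg.differentiable one_ne_zero).differentiableAt)
  simpa using this

theorem jac_smul_cross {f : EuclideanSpace ℝ (Fin 3) → ℝ} {x : EuclideanSpace ℝ (Fin 3)}
    (hf : DifferentiableAt ℝ f x) (c : EuclideanSpace ℝ (Fin 3)) (i j : Fin 3) :
    jac (fun y => f y • cross y c) x i j =
      grd f x j * cross x c i + f x * cross (EuclideanSpace.single j 1) c i := by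
  have := (hf.hasFDerivAt.smul (crossRightL c).hasFDerivAt).fderiv
  simp only [crossRightL_apply] at this
  simp only [jac, grd]
  erw [this]
  simp [crossRightL_apply]
  ring

/-- The `j`-th component of the momentum flux `(u · v) u + ½‖u‖² v`, whose divergence
collects everything that is integrated by parts. -/
def flux (u v : EuclideanSpace ℝ (Fin 3) → EuclideanSpace ℝ (Fin 3)) (j : Fin 3)
    (y : EuclideanSpace ℝ (Fin 3)) : ℝ :=
  u y j * dotp (u y) (v y) + 1 / 2 * dotp (u y) (u y) * v y j

/-- The divergence of the flux, sorted so that the EMAC nonlinearity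
`(2D(u)u + (div u)u) · v` appears explicitly, the rest containing derivatives of `v` only. -/
theorem sum_fderiv_flux {u v : EuclideanSpace ℝ (Fin 3) → EuclideanSpace ℝ (Fin 3)}
    {x : EuclideanSpace ℝ (Fin 3)} (hu : DifferentiableAt ℝ u x) (hv : DifferentiableAt ℝ v x) :
    ∑ j, fderiv ℝ (flux u v j) x (EuclideanSpace.single j 1) =
      2 * dotp (matVec (defT u x) (u x)) (v x) + dvg u x * dotp (u x) (v x)
      + (∑ i, ∑ j, u x i * u x j * jac v x i j) + 1 / 2 * dotp (u x) (u x) * dvg v x := by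
  have hc : ∀ {w : EuclideanSpace ℝ (Fin 3) → EuclideanSpace ℝ (Fin 3)},
      DifferentiableAt ℝ w x → ∀ i, HasFDerivAt (fun y => w y i)
        ((EuclideanSpace.proj i : EuclideanSpace ℝ (Fin 3) →L[ℝ] ℝ).comp (fderiv ℝ w x)) x :=
    fun hw i => hasFDerivWithinAt_univ.1
      (hasFDerivWithinAt_euclidean.1 (hasFDerivWithinAt_univ.2 hw.hasFDerivAt) i)
  have hd : ∀ j, fderiv ℝ (flux u v j) x (EuclideanSpace.single j 1) =
      jac u x j j * dotp (u x) (v x)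
      + u x j * (∑ i, (jac u x i j * v x i + u x i * jac v x i j))
      + (∑ i, u x i * jac u x i j) * v x j + 1 / 2 * dotp (u x) (u x) * jac v x j j := by
    intro j
    have hs : ∀ {w z : EuclideanSpace ℝ (Fin 3) → EuclideanSpace ℝ (Fin 3)},
        DifferentiableAt ℝ w x → DifferentiableAt ℝ z x →
        HasFDerivAt (fun y => dotp (w y) (z y)) _ x := fun hw hz =>
      HasFDerivAt.fun_sum (u := Finset.univ) fun i _ => (hc hw i).mul (hc hz i)
    have h := ((hc hu j).mul (hs hu hv)).add (((hs hu hu).const_mul (1 / 2)).mul (hc hv j))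
    have h2 := h.fderiv
    have h3 : fderiv ℝ (flux u v j) x = _ := h2
    rw [h3]
    simp [jac, Fin.sum_univ_three, dotp]
    ring
  simp only [hd, dotp, matVec_apply, defT, dvg, Matrix.trace, Fin.sum_univ_three]
  simp
  ring

/-- For `v = f (x × c)`, the EMAC integrand equals, up to the divergence of the flux, the
`c`-component of the difference of the two sides of the angular momentum balance. The derivative
of `x × c` is skew-symmetric, so it drops out of `⟨D(u), D(v)⟩`, `div v` and `u · (∇v) u`.
The vector `ut`, and the scalars `ft` and `p`, stand for `∂ₜu`, `∂ₜφ` and `p̂` at the point; the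
terms in `ft` cancel. -/
theorem pointwise_identity (ν p : ℝ) {u : EuclideanSpace ℝ (Fin 3) → EuclideanSpace ℝ (Fin 3)}
    {f : EuclideanSpace ℝ (Fin 3) → ℝ} {x : EuclideanSpace ℝ (Fin 3)}
    (hu : DifferentiableAt ℝ u x) (hf : DifferentiableAt ℝ f x)
    (ut : EuclideanSpace ℝ (Fin 3)) (ft : ℝ) (c : EuclideanSpace ℝ (Fin 3)) :
    dotp ut (f x • cross x c) + 2 * dotp (matVec (defT u x) (u x)) (f x • cross x c)
      + dvg u x * dotp (u x) (f x • cross x c)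
      + 2 * ν * frob (defT u x) (defT (fun y => f y • cross y c) x)
      - p * dvg (fun y => f y • cross y c) x
    = inner ℝ c ((f x • cross ut x + ft • cross (u x) x)
        - ((-(2 * ν)) • cross (matVec (defT u x) (grd f x)) x
            + (p + (1/2) * ‖u x‖ ^ 2) • cross (grd f x) x)
        - (ft + dotp (u x) (grd f x)) • cross (u x) x)
      + ∑ j, fderiv ℝ (flux u (fun y => f y • cross y c) j) x (EuclideanSpace.single j 1) := by
  have hv : DifferentiableAt ℝ (fun y => f y • cross y c) x :=
    hf.smul (crossRightL c).differentiableAt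
  rw [sum_fderiv_flux hu hv, EuclideanSpace.norm_sq_eq]
  simp only [PiLp.inner_apply, dotp, matVec_apply, defT, dvg, frob, Matrix.trace, Fin.sum_univ_three, Matrix.diag, Matrix.add_apply, Matrix.smul_apply,
    Matrix.transpose_apply, jac_smul_cross hf]
  simp [cross_apply_vec, matVec_apply, Fin.sum_univ_three]
  ring

theorem contDiff_flux {u v : EuclideanSpace ℝ (Fin 3) → EuclideanSpace ℝ (Fin 3)}
    (hu : ContDiff ℝ 1 u) (hv : ContDiff ℝ 1 v) (j : Fin 3) : ContDiff ℝ 1 (flux u v j) := by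
  unfold flux dotp
  fun_prop

theorem contDiff_slice {F : Type*} [NormedAddCommGroup F] [NormedSpace ℝ F]
    {f : ℝ → EuclideanSpace ℝ (Fin 3) → F} (hf : ContDiff ℝ 1 (Function.uncurry f)) (t : ℝ) :
    ContDiff ℝ 1 (f t) :=
  hf.comp (contDiff_prodMk_right t)

/-- The partial time derivative of a jointly `C¹` field exists and is jointly continuous. -/
theorem time_deriv {F : Type*} [NormedAddCommGroup F] [NormedSpace ℝ F]
    {f : ℝ → EuclideanSpace ℝ (Fin 3) → F} (hf : ContDiff ℝ 1 (Function.uncurry f)) :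
    (∀ x t, HasDerivAt (fun s => f s x) (deriv (fun s => f s x) t) t) ∧
      Continuous fun p : ℝ × EuclideanSpace ℝ (Fin 3) => deriv (fun s => f s p.2) p.1 := by
  have h : ∀ x t, HasDerivAt (fun s => f s x) (fderiv ℝ (Function.uncurry f) (t, x) (1, 0)) t :=
    fun x t => HasFDerivAt.comp_hasDerivAt (l := Function.uncurry f) (f := fun s => (s, x)) t
      ((hf.differentiable one_ne_zero) (t, x)).hasFDerivAt
      ((hasDerivAt_id t).prodMk (hasDerivAt_const t x))
  refine ⟨fun x t => (h x t).differentiableAt.hasDerivAt, ?_⟩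
  simp only [fun x t => (h x t).deriv]
  exact (hf.continuous_fderiv one_ne_zero).clm_apply continuous_const

/-- If the EMAC variational identity holds at every time when tested against
the fields `v = φ(t,·) (x × c)`, then with `p = p̂ + ½‖u‖²` the weak (diffuse-volume)
Lagrangian local angular momentum balance holds up to the transport residual
`R(t) = ∫ (∂ₜφ + u·∇φ)(u × x) dx`:
`d/dt ∫ φ (u × x) dx = ∫ [−2ν (D(u)∇φ) × x + p (∇φ × x)] dx + R(t)`. -/
theorem emac_weak_lagrangian_angular_momentum (ν : ℝ) (hν : 0 ≤ ν)
    (u : ℝ → EuclideanSpace ℝ (Fin 3) → EuclideanSpace ℝ (Fin 3))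
    (phat : ℝ → EuclideanSpace ℝ (Fin 3) → ℝ)
    (φ : ℝ → EuclideanSpace ℝ (Fin 3) → ℝ)
    (hu : ContDiff ℝ 1 (Function.uncurry u))
    (hphat : Continuous (Function.uncurry phat))
    (hφ : ContDiff ℝ 1 (Function.uncurry φ))
    (K : Set (EuclideanSpace ℝ (Fin 3))) (hK : IsCompact K)
    (hsupp : ∀ t, tsupport (φ t) ⊆ K)
    (hEMAC : ∀ (t : ℝ) (c : EuclideanSpace ℝ (Fin 3)),
      (∫ x, (dotp (deriv (fun s => u s x) t) (φ t x • cross x c)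
        + 2 * dotp (matVec (defT (u t) x) (u t x)) (φ t x • cross x c)
        + dvg (u t) x * dotp (u t x) (φ t x • cross x c)
        + 2 * ν * frob (defT (u t) x) (defT (fun y => φ t y • cross y c) x)
        - phat t x * dvg (fun y => φ t y • cross y c) x)) = 0) :
    ∀ t : ℝ,
      HasDerivAt (fun s => ∫ x, φ s x • cross (u s x) x)
        ((∫ x, ((-(2 * ν)) • cross (matVec (defT (u t) x) (grd (φ t) x)) x
            + (phat t x + (1/2) * ‖u t x‖ ^ 2) • cross (grd (φ t) x) x))
          + ∫ x, (deriv (fun s => φ s x) t + dotp (u t x) (grd (φ t) x)) • cross (u t x) x) t := by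
  obtain ⟨hut, hutc⟩ := time_deriv hu
  obtain ⟨hφt, hφtc⟩ := time_deriv hφ
  have hφ0 : ∀ s, ∀ x ∉ K, φ s x = 0 := fun s x hx =>
    image_eq_zero_of_notMem_tsupport fun h => hx (hsupp s h)
  have hφt0 : ∀ s, ∀ x ∉ K, deriv (fun r => φ r x) s = 0 := by
    intro s x hx
    simp [hφ0 _ x hx]
  have hgrd0 : ∀ s, ∀ x ∉ K, grd (φ s) x = 0 := by
    intro s x hx
    have : fderiv ℝ (φ s) x = 0 := by
      refine image_eq_zero_of_notMem_tsupport fun h => hx (hsupp s ?_)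
      exact tsupport_fderiv_subset ℝ h
    ext i
    simp [grd, this]
  have hcr : ∀ {X : Type} [TopologicalSpace X] {a b : X → EuclideanSpace ℝ (Fin 3)},
      Continuous a → Continuous b → Continuous fun y => cross (a y) (b y) :=
    fun ha hb => continuous_cross.comp (ha.prodMk hb)
  have hint : ∀ {g : EuclideanSpace ℝ (Fin 3) → EuclideanSpace ℝ (Fin 3)}, Continuous g →
      (∀ x ∉ K, g x = 0) → Integrable g := fun hg h0 =>
    hg.integrable_of_hasCompactSupport (HasCompactSupport.intro hK h0)
  -- the pointwise time derivative of the angular momentum density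
  set A : ℝ → EuclideanSpace ℝ (Fin 3) → EuclideanSpace ℝ (Fin 3) := fun s x =>
    φ s x • cross (deriv (fun r => u r x) s) x + deriv (fun r => φ r x) s • cross (u s x) x with hA
  have hAc : Continuous (Function.uncurry A) :=
    (hφ.continuous.smul (hcr hutc continuous_snd)).add
      (hφtc.smul (hcr hu.continuous continuous_snd))
  have hA0 : ∀ s, ∀ x ∉ K, A s x = 0 := by
    intro s x hx
    simp [hA, hφ0 s x hx, hφt0 s x hx]
  intro t
  have hder : HasDerivAt (fun s => ∫ x, φ s x • cross (u s x) x) (∫ x, A t x) t := by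
    -- `A` is continuous and supported in `K`, so on `[t - 1, t + 1]` it is dominated by a
    -- constant multiple of the indicator of `K`
    obtain ⟨C, hC⟩ := ((isCompact_Icc (a := t - 1) (b := t + 1)).prod
      hK).exists_bound_of_continuousOn hAc.continuousOn
    have hFc : ∀ s, Continuous fun x => φ s x • cross (u s x) x := fun s =>
      (contDiff_slice hφ s).continuous.smul (hcr (contDiff_slice hu s).continuous continuous_id)
    refine (hasDerivAt_integral_of_dominated_loc_of_deriv_le (F' := A)
      (bound := K.indicator fun _ => C) (s := Icc (t - 1) (t + 1))
      (Icc_mem_nhds (by linarith) (by linarith))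
      (Eventually.of_forall fun s => (hFc s).aestronglyMeasurable)
      (hint (hFc t) fun x hx => by simp [hφ0 t x hx])
      (hAc.comp (Continuous.prodMk_right t)).aestronglyMeasurable ?_ ?_ ?_).2
    · refine Eventually.of_forall fun x s hs => ?_
      by_cases hx : x ∈ K
      · simpa [hx] using hC (s, x) ⟨hs, hx⟩
      · simp [hx, hA0 s x hx]
    · exact (integrable_indicator_iff hK.measurableSet).2
        (integrableOn_const hK.measure_lt_top.ne)
    · exact Eventually.of_forall fun x s _ =>
        (hφt x s).smul ((crossRightL x).hasFDerivAt.comp_hasDerivAt s (hut x s))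
  have hut1 := contDiff_slice hu t
  have hφt1 := contDiff_slice hφ t
  have hdu : Continuous (fderiv ℝ (u t)) := hut1.continuous_fderiv one_ne_zero
  have hgc : Continuous (grd (φ t)) := continuous_of_coord fun i =>
    (hφt1.continuous_fderiv one_ne_zero).clm_apply continuous_const
  have hmv : Continuous fun x => matVec (defT (u t) x) (grd (φ t) x) := by
    refine continuous_of_coord fun i => ?_
    simp only [matVec_apply, defT, jac, Matrix.smul_apply, Matrix.add_apply, Matrix.transpose_apply]
    fun_prop
  have huc := hut1.continuous
  have hpc : Continuous (phat t) := hphat.comp (Continuous.prodMk_right t)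
  set B : EuclideanSpace ℝ (Fin 3) → EuclideanSpace ℝ (Fin 3) := fun x =>
    (-(2 * ν)) • cross (matVec (defT (u t) x) (grd (φ t) x)) x
      + (phat t x + (1/2) * ‖u t x‖ ^ 2) • cross (grd (φ t) x) x with hB
  set R : EuclideanSpace ℝ (Fin 3) → EuclideanSpace ℝ (Fin 3) := fun x =>
    (deriv (fun s => φ s x) t + dotp (u t x) (grd (φ t) x)) • cross (u t x) x with hR
  have hAi : Integrable (A t) := hint (hAc.comp (Continuous.prodMk_right t)) (hA0 t)
  have hz : ∀ x, cross 0 x = 0 := fun x => (crossRightL x).map_zero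
  have hm0 : ∀ M : Matrix (Fin 3) (Fin 3) ℝ, matVec M 0 = 0 := fun M => by
    ext i; simp [matVec_apply]
  have hBi : Integrable B := by
    refine hint ?_ fun x hx => by simp [hB, hgrd0 t x hx, hz, hm0]
    exact ((hcr hmv continuous_id).const_smul (-(2 * ν))).add
      ((hpc.add (continuous_const.mul (huc.norm.pow 2))).smul (hcr hgc continuous_id))
  have hRi : Integrable R := by
    refine hint ?_ fun x hx => by simp [hR, hgrd0 t x hx, hφt0 t x hx, dotp]
    refine Continuous.smul ((hφtc.comp (Continuous.prodMk_right t)).add ?_)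
      (hcr huc continuous_id)
    unfold dotp
    fun_prop
  have hAB : Integrable fun x => A t x - B x := hAi.sub hBi
  have hABR : Integrable fun x => A t x - B x - R x := hAB.sub hRi
  have key : ∀ c : EuclideanSpace ℝ (Fin 3), inner ℝ c (∫ x, (A t x - B x - R x)) = 0 := by
    intro c
    have hv : ContDiff ℝ 1 fun y => φ t y • cross y c := hφt1.smul (crossRightL c).contDiff
    have hflux := fun j => integral_fderiv_zero (contDiff_flux hut1 hv j)
      (HasCompactSupport.intro hK fun x hx => by simp [flux, dotp, hφ0 t x hx])
      (EuclideanSpace.single j 1)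
    have h := hEMAC t c
    simp only [fun x => pointwise_identity ν (phat t x)
      (hut1.differentiable one_ne_zero).differentiableAt
      (hφt1.differentiable one_ne_zero).differentiableAt
      (deriv (fun s => u s x) t) (deriv (fun s => φ s x) t) c (x := x)] at h
    rw [integral_add (hABR.const_inner c) (integrable_finsetSum _ fun j _ => (hflux j).1),
      integral_finsetSum _ fun j _ => (hflux j).1] at h
    simp only [(hflux _).2, Finset.sum_const_zero, add_zero] at h
    rw [← integral_inner hABR c]
    exact h
  -- a vector orthogonal to every `c` vanishes
  have h0 : ∫ x, (A t x - B x - R x) = 0 := inner_self_eq_zero.1 (key _)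
  rw [integral_sub hAB hRi, integral_sub hAi hBi, sub_sub, sub_eq_zero] at h0
  rw [← h0]
  exact hder

end
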